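/- arXiv:1406.2622 — 6 statements merged into one kernel-verified Lean document; each statement's English description precedes it below -/
import Mathlib

section
/- Let α be a type with decidable equality. For finite multisets s, t over α, define H(s,t) = max(card s, card t) − card(s ∩ t), where ∩ denotes multiset intersection and card denotes multiset cardinality. (This function coincides with the paper's generalized Hamming metric, which counts the minimal number of insertions, deletions and changes needed to transform one unordered training set into the other, permutations being free.) Then H is a metric on the set of finite multisets over α: H(s,t) ≥ 0; H(s,t) = 0 if and only if s = t; H(s,t) = H(t,s); and H(s,u) ≤ H(s,t) + H(t,u) for all finite multisets s, t, u. -/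
/-!
For every element `b` of a lattice, `(a ⊓ b) ⊔ (b ⊓ c) ≤ b` and `(a ⊓ b) ⊓ (b ⊓ c) ≤ a ⊓ c`. Hence a
monotone function `v` with `v x + v y ≤ v (x ⊔ y) + v (x ⊓ y)` satisfies
`v (a ⊓ b) + v (b ⊓ c) ≤ v b + v (a ⊓ c)`, which is what the triangle inequality for
`max (v a) (v b) - v (a ⊓ b)` comes down to. Cardinality of multisets is such a function, with
equality, because `s ∪ t + s ∩ t = s + t`.
-/

theorem eq_of_le_of_map_le_of_strictMono {P Q : Type*} [PartialOrder P] [Preorder Q] {v : P → Q}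
    (hv : StrictMono v) {a b : P} (hab : a ≤ b) (hba : v b ≤ v a) : a = b :=
  hab.eq_of_not_lt fun hlt ↦ (hv hlt).not_ge hba

/-- Supermodularity of a function on a lattice: one half of the valuation identity
`v a + v b = v (a ⊔ b) + v (a ⊓ b)`, and the half that makes `infDefect v` satisfy the triangle
inequality. -/
def IsSupermodular {L M : Type*} [Lattice L] [Add M] [LE M] (v : L → M) : Prop :=
  ∀ a b, v a + v b ≤ v (a ⊔ b) + v (a ⊓ b)

theorem IsSupermodular.map_inf_add_map_inf_le {L M : Type*} [Lattice L] [Add M] [Preorder M]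
    [AddLeftMono M] [AddRightMono M] {v : L → M} (hsup : IsSupermodular v) (hv : Monotone v)
    (a b c : L) : v (a ⊓ b) + v (b ⊓ c) ≤ v b + v (a ⊓ c) :=
  calc
    v (a ⊓ b) + v (b ⊓ c) ≤ v (a ⊓ b ⊔ b ⊓ c) + v (a ⊓ b ⊓ (b ⊓ c)) := hsup _ _
    _ ≤ v b + v (a ⊓ c) :=
      add_le_add (hv (sup_le inf_le_right inf_le_left)) (hv (inf_le_inf inf_le_left inf_le_right))

/-- The generalized Hamming distance attached to a size function `v` on a meet-semilattice: by how
much the common part `a ⊓ b` falls short of the larger of `a` and `b`. The values lie in a group, so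
that the subtraction is not truncated. -/
def infDefect {L M : Type*} [SemilatticeInf L] [AddCommGroup M] [LinearOrder M]
    (v : L → M) (a b : L) : M :=
  max (v a) (v b) - v (a ⊓ b)

section InfDefect

variable {L M : Type*} [AddCommGroup M] [LinearOrder M]

theorem infDefect_self [SemilatticeInf L] (v : L → M) (a : L) : infDefect v a a = 0 := by
  rw [infDefect, max_self, inf_idem, sub_self]

theorem infDefect_comm [SemilatticeInf L] (v : L → M) (a b : L) :
    infDefect v a b = infDefect v b a := by
  rw [infDefect, infDefect, max_comm, inf_comm]

variable [IsOrderedAddMonoid M]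

theorem infDefect_le_iff [SemilatticeInf L] {v : L → M} {a b : L} {r : M} :
    infDefect v a b ≤ r ↔ v a ≤ r + v (a ⊓ b) ∧ v b ≤ r + v (a ⊓ b) := by
  rw [infDefect, sub_le_iff_le_add, max_le_iff]

theorem infDefect_nonneg [SemilatticeInf L] {v : L → M} (hv : Monotone v) (a b : L) :
    0 ≤ infDefect v a b :=
  sub_nonneg.2 <| (hv inf_le_left).trans (le_max_left _ _)

theorem infDefect_eq_zero_iff [SemilatticeInf L] {v : L → M} (hv : StrictMono v) {a b : L} :
    infDefect v a b = 0 ↔ a = b := by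
  refine ⟨fun h ↦ ?_, fun h ↦ h ▸ infDefect_self v a⟩
  obtain ⟨ha, hb⟩ := infDefect_le_iff.1 h.le
  rw [zero_add] at ha hb
  have hleft : a ⊓ b = a := eq_of_le_of_map_le_of_strictMono hv inf_le_left ha
  have hright : a ⊓ b = b := eq_of_le_of_map_le_of_strictMono hv inf_le_right hb
  exact hleft.symm.trans hright

theorem IsSupermodular.infDefect_triangle [Lattice L] {v : L → M} (hsup : IsSupermodular v)
    (hv : Monotone v) (a b c : L) : infDefect v a c ≤ infDefect v a b + infDefect v b c := by
  have hmid : v (a ⊓ b) + v (b ⊓ c) ≤ v b + v (a ⊓ c) := hsup.map_inf_add_map_inf_le hv a b c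
  obtain ⟨ha_ab, hb_ab⟩ := infDefect_le_iff.1 (le_refl (infDefect v a b))
  obtain ⟨hb_bc, hc_bc⟩ := infDefect_le_iff.1 (le_refl (infDefect v b c))
  refine infDefect_le_iff.2 ⟨?_, ?_⟩
  -- The sum of `hmid`, `ha_ab` and `hb_bc`, after cancellation.
  · grind only
  -- The sum of `hmid`, `hb_ab` and `hc_bc`, after cancellation.
  · grind only

theorem generalized_hamming_is_metric_general [Lattice L] {v : L → M} (hv : StrictMono v)
    (hsup : IsSupermodular v) :
    (∀ a b, 0 ≤ infDefect v a b) ∧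
    (∀ a b, infDefect v a b = 0 ↔ a = b) ∧
    (∀ a b, infDefect v a b = infDefect v b a) ∧
    (∀ a b c, infDefect v a c ≤ infDefect v a b + infDefect v b c) :=
  ⟨infDefect_nonneg hv.monotone, fun _ _ ↦ infDefect_eq_zero_iff hv, infDefect_comm v,
    hsup.infDefect_triangle hv.monotone⟩

end InfDefect

section Card

variable {α : Type*}

theorem strictMono_intCast_card : StrictMono fun s : Multiset α ↦ (s.card : ℤ) :=
  Nat.strictMono_cast.comp Multiset.card_strictMono

variable [DecidableEq α]

theorem isSupermodular_intCast_card : IsSupermodular fun s : Multiset α ↦ (s.card : ℤ) := by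
  intro s t
  have hcard : (s ∪ t).card + (s ∩ t).card = s.card + t.card := by
    rw [← Multiset.card_add, Multiset.union_add_inter, Multiset.card_add]
  exact Int.ofNat_le.2 hcard.ge

theorem intCast_max_card_sub_card_inter (s t : Multiset α) :
    ((max s.card t.card - (s ∩ t).card : ℕ) : ℤ) =
      infDefect (fun s : Multiset α ↦ (s.card : ℤ)) s t := by
  have hle : (s ∩ t).card ≤ max s.card t.card :=
    (Multiset.card_le_card Multiset.inter_le_left).trans (le_max_left _ _)
  rw [infDefect, Nat.cast_sub hle, Nat.cast_max, Multiset.inf_eq_inter]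

end Card

theorem generalized_hamming_is_metric {α : Type*} [DecidableEq α]
    (H : Multiset α → Multiset α → ℕ)
    (hH : ∀ s t : Multiset α,
      H s t = max (Multiset.card s) (Multiset.card t) - Multiset.card (s ∩ t)) :
    (∀ s t : Multiset α, 0 ≤ H s t) ∧
    (∀ s t : Multiset α, H s t = 0 ↔ s = t) ∧
    (∀ s t : Multiset α, H s t = H t s) ∧
    (∀ s t u : Multiset α, H s u ≤ H s t + H t u) := by
  have hmetric := generalized_hamming_is_metric_general (strictMono_intCast_card (α := α))
    isSupermodular_intCast_card
  simp only [← intCast_max_card_sub_card_inter, ← hH] at hmetric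
  exact_mod_cast hmetric
end

section
/- Let n ≥ 1, λ > 0, m > 1, and d : Fin n → ℝ with dᵢ ≥ 0 for all i, and Y' ∈ ℝⁿ such that Σᵢ dᵢ·Y'ᵢ² > 0. Define F on the positive reals by F(C) = (Σᵢ 4·dᵢ·Y'ᵢ² / (2·dᵢ + λ·m·n·C)²)^(m/2 − 1) − C. Then F has exactly one root in (0, ∞): there exists a unique C₀ > 0 with F(C₀) = 0. -/
/-!
Write `S C` for the sum and `p = m / 2 - 1`. In the logarithmic variable `c = log C` the equation
`S C ^ p = C` reads `p * s c = c` with `s c = log (S (exp c))`. Since `S` is decreasing while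
`C ^ 2 * S C` is increasing, `s` has slopes in `[-2, 0]`; in particular it is continuous, and the
slopes of `c - p * s c` are at least `min 1 (1 + 2 * p)`, which is positive because
`1 + 2 * p = m - 1`. A continuous function with slopes bounded below by a positive constant is a
bijection of `ℝ`.
-/

open Filter Set

theorem bijective_of_continuous_of_monotone_sub_mul {g : ℝ → ℝ} {δ : ℝ} (hδ : 0 < δ)
    (hg : Continuous g) (hmono : Monotone fun x ↦ g x - δ * x) : Function.Bijective g := by
  have hlin : StrictMono fun x : ℝ ↦ δ * x := strictMono_mul_left_of_pos hδ
  have hsplit : g = fun x ↦ (g x - δ * x) + δ * x := by simp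
  constructor
  · rw [hsplit]
    exact (hmono.add_strictMono hlin).injective
  · apply hg.surjective
    · rw [hsplit]
      refine tendsto_atTop_add_left_of_le' _ (g 0 - δ * 0) ?_ (tendsto_id.const_mul_atTop hδ)
      filter_upwards [eventually_ge_atTop 0] with x hx using hmono hx
    · rw [hsplit]
      refine tendsto_atBot_add_left_of_ge' _ (g 0 - δ * 0) ?_ (tendsto_id.const_mul_atBot hδ)
      filter_upwards [eventually_le_atBot 0] with x hx using hmono hx

theorem lipschitzWith_of_antitone_of_monotone_mul_add {s : ℝ → ℝ} {r : ℝ} (hs : Antitone s)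
    (hrs : Monotone fun x ↦ r * x + s x) : LipschitzWith r.toNNReal s := by
  refine LipschitzWith.of_le_add_mul' r fun x y ↦ ?_
  rw [Real.dist_eq]
  rcases le_total x y with hxy | hyx
  · rw [abs_of_nonpos (sub_nonpos.2 hxy)]
    linarith [hrs hxy]
  · rw [abs_of_nonneg (sub_nonneg.2 hyx)]
    linarith [hs hyx, hrs hyx]

theorem existsUnique_mul_eq_self {s : ℝ → ℝ} {p r : ℝ} (hs : Antitone s)
    (hrs : Monotone fun x ↦ r * x + s x) (hpr : 0 < 1 + r * p) : ∃! x, p * s x = x := by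
  have hcont : Continuous fun x ↦ x - p * s x := by
    have := (lipschitzWith_of_antitone_of_monotone_mul_add hs hrs).continuous
    fun_prop
  have hbij : Function.Bijective fun x ↦ x - p * s x := by
    rcases le_total 0 p with hp | hp
    · refine bijective_of_continuous_of_monotone_sub_mul one_pos hcont fun x y hxy ↦ ?_
      linarith [mul_le_mul_of_nonneg_left (hs hxy) hp]
    · refine bijective_of_continuous_of_monotone_sub_mul hpr hcont fun x y hxy ↦ ?_
      linarith [mul_le_mul_of_nonpos_left (hrs hxy) hp]
  simpa only [sub_eq_zero, eq_comm] using hbij.existsUnique 0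

theorem existsUnique_pos_rpow_eq_self {S : ℝ → ℝ} {p r : ℝ} (hpos : ∀ x, 0 < x → 0 < S x)
    (hanti : AntitoneOn S (Ioi 0)) (hmono : MonotoneOn (fun x ↦ x ^ r * S x) (Ioi 0))
    (hpr : 0 < 1 + r * p) : ∃! x, 0 < x ∧ S x ^ p = x := by
  have hS (c : ℝ) : 0 < S (Real.exp c) := hpos _ (Real.exp_pos c)
  have hlog_anti : Antitone fun c ↦ Real.log (S (Real.exp c)) := fun a b hab ↦
    Real.log_le_log (hS b) (hanti (Real.exp_pos a) (Real.exp_pos b) (Real.exp_le_exp.2 hab))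
  have hlog_mul (c : ℝ) :
      Real.log (Real.exp c ^ r * S (Real.exp c)) = r * c + Real.log (S (Real.exp c)) := by
    rw [Real.log_mul (by positivity) (hS c).ne', Real.log_rpow (Real.exp_pos c), Real.log_exp]
  have hlog_mono : Monotone fun c ↦ r * c + Real.log (S (Real.exp c)) := fun a b hab ↦ by
    simp only [← hlog_mul]
    exact Real.log_le_log (mul_pos (by positivity) (hS a))
      (hmono (Real.exp_pos a) (Real.exp_pos b) (Real.exp_le_exp.2 hab))
  have hlog_eq (c : ℝ) :
      S (Real.exp c) ^ p = Real.exp c ↔ p * Real.log (S (Real.exp c)) = c := by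
    rw [Real.rpow_def_of_pos (hS c), Real.exp_eq_exp, mul_comm]
  obtain ⟨c, hc, hc_unique⟩ := existsUnique_mul_eq_self hlog_anti hlog_mono hpr
  refine ⟨Real.exp c, ⟨Real.exp_pos c, (hlog_eq c).2 hc⟩, fun x ⟨hx, hx_eq⟩ ↦ ?_⟩
  rw [← Real.exp_log hx] at hx_eq ⊢
  rw [hc_unique _ ((hlog_eq _).1 hx_eq)]

theorem monotoneOn_div_add_mul {b k : ℝ} (hb : 0 ≤ b) (hk : 0 < k) :
    MonotoneOn (fun x ↦ x / (b + k * x)) (Ioi 0) := by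
  intro x hx y hy hxy
  rw [mem_Ioi] at hx hy
  rw [div_le_div_iff₀ (by positivity) (by positivity)]
  linarith [mul_le_mul_of_nonneg_left hxy hb]

section ShiftedPowerSum

variable {ι : Type*} {t : Finset ι} {w b : ι → ℝ} {k : ℝ}

theorem sum_div_add_mul_pow_pos (hw : ∀ i ∈ t, 0 ≤ w i) (hw_sum : 0 < ∑ i ∈ t, w i)
    (hb : ∀ i ∈ t, 0 ≤ b i) (hk : 0 < k) (q : ℕ) {x : ℝ} (hx : 0 < x) :
    0 < ∑ i ∈ t, w i / (b i + k * x) ^ q := by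
  have hden : ∀ i ∈ t, 0 < (b i + k * x) ^ q := fun i hi ↦
    pow_pos (add_pos_of_nonneg_of_pos (hb i hi) (mul_pos hk hx)) q
  obtain ⟨i, hi, hwi⟩ := (Finset.sum_pos_iff_of_nonneg hw).1 hw_sum
  exact Finset.sum_pos' (fun j hj ↦ div_nonneg (hw j hj) (hden j hj).le)
    ⟨i, hi, div_pos hwi (hden i hi)⟩

theorem antitoneOn_sum_div_add_mul_pow (hw : ∀ i ∈ t, 0 ≤ w i) (hb : ∀ i ∈ t, 0 ≤ b i)
    (hk : 0 < k) (q : ℕ) :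
    AntitoneOn (fun x ↦ ∑ i ∈ t, w i / (b i + k * x) ^ q) (Ioi 0) := by
  intro x hx y _ hxy
  refine Finset.sum_le_sum fun i hi ↦ ?_
  have hden : 0 < b i + k * x := add_pos_of_nonneg_of_pos (hb i hi) (mul_pos hk hx)
  have := hw i hi
  gcongr

theorem monotoneOn_pow_mul_sum_div_add_mul_pow (hw : ∀ i ∈ t, 0 ≤ w i)
    (hb : ∀ i ∈ t, 0 ≤ b i) (hk : 0 < k) (q : ℕ) :
    MonotoneOn (fun x ↦ x ^ q * ∑ i ∈ t, w i / (b i + k * x) ^ q) (Ioi 0) := by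
  have hterm (x : ℝ) : x ^ q * ∑ i ∈ t, w i / (b i + k * x) ^ q =
      ∑ i ∈ t, w i * (x / (b i + k * x)) ^ q := by
    rw [Finset.mul_sum]
    exact Finset.sum_congr rfl fun i _ ↦ by rw [div_pow, mul_div_left_comm]
  intro x hx y hy hxy
  simp only [hterm]
  refine Finset.sum_le_sum fun i hi ↦ mul_le_mul_of_nonneg_left ?_ (hw i hi)
  have hnonneg : 0 ≤ x / (b i + k * x) :=
    div_nonneg (le_of_lt hx) (add_nonneg (hb i hi) (mul_pos hk hx).le)
  exact pow_le_pow_left₀ hnonneg (monotoneOn_div_add_mul (hb i hi) hk hx hy hxy) q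

theorem existsUnique_pos_sum_div_add_mul_pow_rpow_eq_self (hw : ∀ i ∈ t, 0 ≤ w i)
    (hw_sum : 0 < ∑ i ∈ t, w i) (hb : ∀ i ∈ t, 0 ≤ b i) (hk : 0 < k) {q : ℕ} {p : ℝ}
    (hqp : 0 < 1 + q * p) :
    ∃! x, 0 < x ∧ (∑ i ∈ t, w i / (b i + k * x) ^ q) ^ p = x := by
  refine existsUnique_pos_rpow_eq_self (fun _ ↦ sum_div_add_mul_pow_pos hw hw_sum hb hk q)
    (antitoneOn_sum_div_add_mul_pow hw hb hk q) ?_ hqp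
  simpa only [Real.rpow_natCast] using monotoneOn_pow_mul_sum_div_add_mul_pow hw hb hk q

end ShiftedPowerSum

theorem F_has_unique_positive_root (n : ℕ) (hn : 1 ≤ n)
    (lam m : ℝ) (hlam : 0 < lam) (hm : 1 < m)
    (d : Fin n → ℝ) (hd : ∀ i, 0 ≤ d i)
    (Y' : Fin n → ℝ) (hY' : 0 < ∑ i, d i * (Y' i) ^ 2)
    (F : ℝ → ℝ)
    (hF : ∀ C : ℝ, 0 < C →
      F C = (∑ i, 4 * d i * (Y' i) ^ 2 / (2 * d i + lam * m * n * C) ^ 2) ^ (m / 2 - 1) - C) :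
    ∃! C₀ : ℝ, 0 < C₀ ∧ F C₀ = 0 := by
  have hk : 0 < lam * m * n :=
    mul_pos (mul_pos hlam (one_pos.trans hm)) (Nat.cast_pos.2 hn)
  have hw : ∀ i ∈ Finset.univ, 0 ≤ 4 * d i * (Y' i) ^ 2 := fun i _ ↦ by
    have := hd i
    positivity
  have hw_sum : 0 < ∑ i, 4 * d i * (Y' i) ^ 2 := by
    simpa only [mul_assoc, ← Finset.mul_sum] using mul_pos four_pos hY'
  have hb : ∀ i ∈ Finset.univ, 0 ≤ 2 * d i := fun i _ ↦ mul_nonneg two_pos.le (hd i)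
  have hexp : 0 < 1 + (2 : ℕ) * (m / 2 - 1) := by
    push_cast
    linarith
  have hroot (C : ℝ) : (0 < C ∧ F C = 0) ↔ 0 < C ∧
      (∑ i, 4 * d i * (Y' i) ^ 2 / (2 * d i + lam * m * n * C) ^ 2) ^ (m / 2 - 1) = C :=
    and_congr_right fun hC ↦ by rw [hF C hC, sub_eq_zero]
  exact (existsUnique_congr hroot).2
    (existsUnique_pos_sum_div_add_mul_pow_rpow_eq_self hw hw_sum hb hk hexp)
end

section
/- Let n ≥ 1, let K be a real symmetric positive semidefinite n×n matrix, Y ∈ ℝⁿ, λ > 0 and m ≥ 1. Then the M-RLSR objective J(a) = ‖Y − K·a‖² + n·λ·(aᵀ·K·a)^(m/2) is a convex function on ℝⁿ. Moreover, if m > 1 and K is positive definite, then J is strictly convex on ℝⁿ. -/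
open Matrix

/-! The penalty `(aᵀ K a) ^ (m / 2)` is the `m`-th power of the seminorm attached to `K`, hence
convex for `m ≥ 1`. The data term is the squared Euclidean norm composed with an affine map. That
square is strictly convex, and the composition stays strictly convex when the affine map is
injective, so the strict convexity of the objective comes from its data term alone. -/

theorem convexOn_rpow_comp {E : Type*} [AddCommMonoid E] [SMul ℝ E] {s : Set E} {f : E → ℝ}
    (hf : ConvexOn ℝ s f) (hf₀ : ∀ x ∈ s, 0 ≤ f x) {p : ℝ} (hp : 1 ≤ p) :
    ConvexOn ℝ s fun x ↦ f x ^ p := by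
  refine ⟨hf.1, fun x hx y hy a b ha hb hab ↦ ?_⟩
  calc f (a • x + b • y) ^ p
      ≤ (a • f x + b • f y) ^ p :=
        Real.rpow_le_rpow (hf₀ _ (hf.1 hx hy ha hb hab)) (hf.2 hx hy ha hb hab) (by linarith)
    _ ≤ a • f x ^ p + b • f y ^ p := (convexOn_rpow hp).2 (hf₀ x hx) (hf₀ y hy) ha hb hab

theorem strictConvexOn_comp_affineMap_of_injective {𝕜 E F β : Type*} [Field 𝕜] [LinearOrder 𝕜]
    [AddCommGroup E] [Module 𝕜 E] [AddCommGroup F] [Module 𝕜 F] [AddCommMonoid β]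
    [PartialOrder β] [SMul 𝕜 β] {s : Set F} {f : F → β}
    (hf : StrictConvexOn 𝕜 s f) {g : E →ᵃ[𝕜] F} (hg : Function.Injective g) :
    StrictConvexOn 𝕜 (g ⁻¹' s) (f ∘ g) := by
  refine ⟨hf.1.affine_preimage g, fun x hx y hy hxy a b ha hb hab ↦ ?_⟩
  simpa only [Function.comp_apply, Convex.combo_affine_apply hab] using
    hf.2 hx hy (hg.ne hxy) ha hb hab

theorem strictConvexOn_norm_sq {E : Type*} [NormedAddCommGroup E] [InnerProductSpace ℝ E]
    {s : Set E} (hs : Convex ℝ s) : StrictConvexOn ℝ s fun x ↦ ‖x‖ ^ 2 := by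
  have strong : StrongConvexOn s 2 fun x ↦ ‖x‖ ^ 2 :=
    strongConvexOn_iff_convex.2 (by simpa using convexOn_const 0 hs)
  exact strong.strictConvexOn two_pos

section

variable {E F : Type*} [AddCommGroup E] [Module ℝ E]

theorem convexOn_norm_sub_map_sq [SeminormedAddCommGroup F] [NormedSpace ℝ F] (L : E →ₗ[ℝ] F)
    (y : F) : ConvexOn ℝ Set.univ fun x ↦ ‖y - L x‖ ^ 2 :=
  (convexOn_univ_norm.comp_affineMap (AffineMap.const ℝ E y - L.toAffineMap)).pow
    (fun _ _ ↦ norm_nonneg _) 2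

theorem strictConvexOn_norm_sub_map_sq [NormedAddCommGroup F] [InnerProductSpace ℝ F]
    {L : E →ₗ[ℝ] F} (hL : Function.Injective L) (y : F) :
    StrictConvexOn ℝ Set.univ fun x ↦ ‖y - L x‖ ^ 2 :=
  strictConvexOn_comp_affineMap_of_injective (strictConvexOn_norm_sq convex_univ)
    (g := AffineMap.const ℝ E y - L.toAffineMap) (sub_right_injective.comp hL)

end

section

variable {ι κ : Type*} [Fintype ι] [Fintype κ]

theorem sum_sub_mulVec_sq_eq_norm_sq (A : Matrix κ ι ℝ) (Y : κ → ℝ) (a : ι → ℝ) :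
    ∑ i, (Y i - (A *ᵥ a) i) ^ 2 =
      ‖WithLp.toLp 2 Y - ((WithLp.linearEquiv 2 ℝ (κ → ℝ)).symm ∘ₗ A.mulVecLin) a‖ ^ 2 := by
  simp [EuclideanSpace.real_norm_sq_eq]

theorem convexOn_sum_sub_mulVec_sq (A : Matrix κ ι ℝ) (Y : κ → ℝ) :
    ConvexOn ℝ Set.univ fun a ↦ ∑ i, (Y i - (A *ᵥ a) i) ^ 2 := by
  simpa only [sum_sub_mulVec_sq_eq_norm_sq] using convexOn_norm_sub_map_sq _ _

theorem strictConvexOn_sum_sub_mulVec_sq {A : Matrix κ ι ℝ} (hA : Function.Injective A.mulVec)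
    (Y : κ → ℝ) : StrictConvexOn ℝ Set.univ fun a ↦ ∑ i, (Y i - (A *ᵥ a) i) ^ 2 := by
  simpa only [sum_sub_mulVec_sq_eq_norm_sq] using
    strictConvexOn_norm_sub_map_sq ((WithLp.toLp_injective 2).comp hA) _

theorem convexOn_sqrt_dotProduct_mulVec {K : Matrix ι ι ℝ} (hK : K.PosSemidef) :
    ConvexOn ℝ Set.univ fun a ↦ √(a ⬝ᵥ K *ᵥ a) := by
  let seminormed := K.toSeminormedAddCommGroup hK
  let innerProduct := K.toInnerProductSpace hK
  -- `‖a‖` would elaborate to the sup norm on `ι → ℝ`, so the instances are passed explicitly.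
  have norm_eq_sqrt (a : ι → ℝ) : seminormed.norm a = √(a ⬝ᵥ K *ᵥ a) := by
    rw [dotProduct_comm]
    exact norm_eq_sqrt_real_inner a
  simpa only [← norm_eq_sqrt] using
    @convexOn_univ_norm (ι → ℝ) seminormed innerProduct.toNormedSpace

theorem convexOn_dotProduct_mulVec_rpow {K : Matrix ι ι ℝ} (hK : K.PosSemidef) {m : ℝ}
    (hm : 1 ≤ m) : ConvexOn ℝ Set.univ fun a ↦ (a ⬝ᵥ K *ᵥ a) ^ (m / 2) := by
  have sqrt_rpow (a : ι → ℝ) : √(a ⬝ᵥ K *ᵥ a) ^ m = (a ⬝ᵥ K *ᵥ a) ^ (m / 2) :=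
    (Real.rpow_div_two_eq_sqrt m (hK.dotProduct_mulVec_nonneg a)).symm
  simpa only [sqrt_rpow] using
    convexOn_rpow_comp (convexOn_sqrt_dotProduct_mulVec hK) (fun _ _ ↦ Real.sqrt_nonneg _) hm

theorem mrlsr_objective_convex_general (A : Matrix κ ι ℝ) {K : Matrix ι ι ℝ} (hK : K.PosSemidef)
    (Y : κ → ℝ) {c m : ℝ} (hc : 0 ≤ c) (hm : 1 ≤ m) {J : (ι → ℝ) → ℝ}
    (hJ : ∀ a, J a = (∑ i, (Y i - (A *ᵥ a) i) ^ 2) + c * (a ⬝ᵥ K *ᵥ a) ^ (m / 2)) :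
    ConvexOn ℝ Set.univ J ∧ (Function.Injective A.mulVec → StrictConvexOn ℝ Set.univ J) := by
  have penalty := (convexOn_dotProduct_mulVec_rpow hK hm).smul hc
  obtain rfl := funext hJ
  exact ⟨(convexOn_sum_sub_mulVec_sq A Y).add penalty,
    fun hA ↦ (strictConvexOn_sum_sub_mulVec_sq hA Y).add_convexOn penalty⟩

end

theorem mrlsr_objective_convex (n : ℕ) (hn : 1 ≤ n)
    (K : Matrix (Fin n) (Fin n) ℝ) (hK : K.PosSemidef)
    (Y : Fin n → ℝ) (lam m : ℝ) (hlam : 0 < lam) (hm : 1 ≤ m)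
    (J : (Fin n → ℝ) → ℝ)
    (hJ : ∀ a, J a = (∑ i, (Y i - K.mulVec a i) ^ 2) + n * lam * (a ⬝ᵥ K.mulVec a) ^ (m / 2)) :
    ConvexOn ℝ Set.univ J ∧ (1 < m → K.PosDef → StrictConvexOn ℝ Set.univ J) :=
  have general := mrlsr_objective_convex_general K hK Y (by positivity) hm hJ
  ⟨general.1, fun _ hPD ↦ general.2 (mulVec_injective_of_isUnit hPD.isUnit)⟩
end

section
/- Let H be a real inner product space and let m ≥ 2 be a real number. Then for all u, v ∈ H: ‖u + v‖^m + ‖u − v‖^m ≥ 2·‖u‖^m + 2·‖v‖^m, where the powers are real powers of nonnegative reals. -/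
/-!
Since `1 ≤ m / 2`, the function `t ↦ t ^ (m / 2)` is superadditive and convex on the nonnegative
reals. Superadditivity bounds `‖u‖ ^ m + ‖v‖ ^ m` by `(‖u‖ ^ 2 + ‖v‖ ^ 2) ^ (m / 2)`; by the
parallelogram law this is the value at the midpoint of `‖u + v‖ ^ 2` and `‖u - v‖ ^ 2`, which
convexity bounds by the mean of the values at these two points.
-/

theorem two_mul_rpow_add_rpow_le_of_two_mul_add_le {a b c d p : ℝ} (ha : 0 ≤ a) (hb : 0 ≤ b)
    (hc : 0 ≤ c) (hd : 0 ≤ d) (hp : 1 ≤ p) (h : 2 * (a + b) ≤ c + d) :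
    2 * (a ^ p + b ^ p) ≤ c ^ p + d ^ p := by
  have superadditive : a ^ p + b ^ p ≤ (a + b) ^ p := Real.add_rpow_le_rpow_add ha hb hp
  have le_midpoint : a + b ≤ 1 / 2 * c + 1 / 2 * d := by linarith
  have monotone : (a + b) ^ p ≤ (1 / 2 * c + 1 / 2 * d) ^ p := by gcongr
  have midpoint_convex : (1 / 2 * c + 1 / 2 * d) ^ p ≤ 1 / 2 * c ^ p + 1 / 2 * d ^ p :=
    (convexOn_rpow hp).2 hc hd (by norm_num) (by norm_num) (by norm_num)
  linarith

theorem norm_pow_m_parallelogram_type_inequality_general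
    (𝕜 : Type*) {H : Type*} [RCLike 𝕜] [SeminormedAddCommGroup H] [InnerProductSpace 𝕜 H]
    (m : ℝ) (hm : 2 ≤ m) (u v : H) :
    2 * ‖u‖ ^ m + 2 * ‖v‖ ^ m ≤ ‖u + v‖ ^ m + ‖u - v‖ ^ m := by
  have norm_rpow (x : H) : ‖x‖ ^ m = (‖x‖ ^ 2) ^ (m / 2) := by
    rw [← Real.rpow_natCast_mul (norm_nonneg x), Nat.cast_ofNat, mul_div_cancel₀ m two_ne_zero]
  simp only [norm_rpow, ← mul_add]
  exact two_mul_rpow_add_rpow_le_of_two_mul_add_le (sq_nonneg _) (sq_nonneg _) (sq_nonneg _)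
    (sq_nonneg _) (by linarith) (parallelogram_law_with_norm 𝕜 u v).ge

theorem norm_pow_m_parallelogram_type_inequality
    {H : Type*} [NormedAddCommGroup H] [InnerProductSpace ℝ H]
    (m : ℝ) (hm : 2 ≤ m) (u v : H) :
    2 * ‖u‖ ^ m + 2 * ‖v‖ ^ m ≤ ‖u + v‖ ^ m + ‖u - v‖ ^ m :=
  norm_pow_m_parallelogram_type_inequality_general ℝ m hm u v
end

section
/- Let X be a type, H a real normed vector space, κ > 0, and ev : H →ₗ[ℝ] (X → ℝ) a linear map satisfying |ev f x| ≤ κ·‖f‖ for all f ∈ H, x ∈ X. Let n ≥ 1, (x₁,y₁),…,(xₙ,yₙ) ∈ X × ℝ with |yₖ| ≤ C_y for all k, λ > 0, m > 0, and fix i with 1 ≤ i ≤ n. Suppose f_Z minimizes over H the objective J_Z(f) = (1/n)·Σₖ₌₁ⁿ (yₖ − ev f xₖ)² + λ·‖f‖^m, and f_{Z^i} minimizes over H the objective J_{Z^i}(f) = (1/n)·Σ_{k≠i} (yₖ − ev f xₖ)² + λ·‖f‖^m. Then for every x ∈ X and every y ∈ ℝ with |y| ≤ C_y: |(y − ev f_Z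 x)² − (y − ev f_{Z^i} x)²| ≤ C·|ev f_Z x − ev f_{Z^i} x|, where C = 2·(C_y + κ·(C_y²/λ)^(1/m)). -/
/-!
Comparing a learned hypothesis with the zero hypothesis bounds its penalty by the mean square of the
labels. This gives a bound on its norm, hence on its values, that is the same for every
subsample; and `t ↦ (y - t) ^ 2` is Lipschitz on a bounded interval.
-/

/-- The objective of `m`-power regularized least squares on the examples `(x k, y k)`, `k ∈ s`,
where `ev f` is the function represented by `f`. The normalization `c` is a parameter separate from
`s`, so that it can stay `1 / n` when an example is removed. -/
noncomputable def regularizedRisk {ι X H : Type*} [Norm H] (ev : H → X → ℝ) (x : ι → X) (y : ι → ℝ)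
    (c lam m : ℝ) (s : Finset ι) (f : H) : ℝ :=
  c * (∑ k ∈ s, (y k - ev f (x k)) ^ 2) + lam * ‖f‖ ^ m

section RegularizedRisk

variable {ι X H : Type*} [SeminormedAddGroup H] {ev : H → X → ℝ} {x : ι → X} {y : ι → ℝ}
  {κ c lam m B Cy : ℝ} {s : Finset ι} {f : H}

theorem norm_le_of_regularizedRisk_le (hc : 0 ≤ c) (hlam : 0 < lam) (hm : 0 < m)
    (hf : regularizedRisk ev x y c lam m s f ≤ B) : ‖f‖ ≤ (B / lam) ^ (1 / m) := by
  have hpenalty : lam * ‖f‖ ^ m ≤ regularizedRisk ev x y c lam m s f :=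
    le_add_of_nonneg_left (by positivity)
  have hpow : ‖f‖ ^ m ≤ B / lam := (le_div_iff₀' hlam).2 (hpenalty.trans hf)
  have hnonneg : 0 ≤ B / lam := (Real.rpow_nonneg (norm_nonneg f) m).trans hpow
  rw [one_div]
  exact (Real.le_rpow_inv_iff_of_pos (norm_nonneg f) hnonneg hm).2 hpow

theorem regularizedRisk_zero (hev : ∀ z, ev 0 z = 0) (hm : m ≠ 0) :
    regularizedRisk ev x y c lam m s 0 = c * ∑ k ∈ s, y k ^ 2 := by
  simp [regularizedRisk, hev, Real.zero_rpow hm]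

theorem mul_sum_sq_le_sq (hc : 0 ≤ c) (hcs : c * s.card ≤ 1) (hy : ∀ k ∈ s, |y k| ≤ Cy) :
    c * ∑ k ∈ s, y k ^ 2 ≤ Cy ^ 2 :=
  calc c * ∑ k ∈ s, y k ^ 2 ≤ c * (s.card * Cy ^ 2) := by
        rw [← nsmul_eq_mul]
        gcongr
        exact Finset.sum_le_card_nsmul _ _ _ fun k hk ↦
          sq_le_sq.2 ((hy k hk).trans (le_abs_self Cy))
    _ = c * s.card * Cy ^ 2 := (mul_assoc _ _ _).symm
    _ ≤ Cy ^ 2 := mul_le_of_le_one_left (sq_nonneg Cy) hcs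

theorem abs_eval_le_of_regularizedRisk_le_zero (hκ : 0 ≤ κ) (hev : ∀ g z, |ev g z| ≤ κ * ‖g‖)
    (hc : 0 ≤ c) (hcs : c * s.card ≤ 1) (hy : ∀ k ∈ s, |y k| ≤ Cy) (hlam : 0 < lam) (hm : 0 < m)
    (hf : regularizedRisk ev x y c lam m s f ≤ regularizedRisk ev x y c lam m s 0) (z : X) :
    |ev f z| ≤ κ * (Cy ^ 2 / lam) ^ (1 / m) := by
  have hev_zero (w : X) : ev 0 w = 0 := by simpa using hev 0 w
  have hrisk : regularizedRisk ev x y c lam m s f ≤ Cy ^ 2 :=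
    (hf.trans_eq (regularizedRisk_zero hev_zero hm.ne')).trans (mul_sum_sq_le_sq hc hcs hy)
  exact (hev f z).trans
    (mul_le_mul_of_nonneg_left (norm_le_of_regularizedRisk_le hc hlam hm hrisk) hκ)

end RegularizedRisk

theorem abs_sub_sq_sub_sub_sq_le {R : Type*} [CommRing R] [LinearOrder R] [IsStrictOrderedRing R]
    {a b y M N : R} (hy : |y| ≤ M) (ha : |a| ≤ N) (hb : |b| ≤ N) :
    |(y - a) ^ 2 - (y - b) ^ 2| ≤ 2 * (M + N) * |a - b| := by
  have hsum : |(y - a) + (y - b)| ≤ 2 * (M + N) := by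
    linarith [abs_add_le (y - a) (y - b), abs_sub y a, abs_sub y b]
  calc |(y - a) ^ 2 - (y - b) ^ 2| = |(y - a) + (y - b)| * |a - b| := by
        rw [sq_sub_sq, abs_mul, sub_sub_sub_cancel_left, abs_sub_comm b a]
    _ ≤ 2 * (M + N) * |a - b| := mul_le_mul_of_nonneg_right hsum (abs_nonneg _)

theorem mrlsr_cost_lipschitz_bound_general {ι X H : Type*} [SeminormedAddGroup H]
    {κ : ℝ} (hκ : 0 ≤ κ) {ev : H → X → ℝ} (hev : ∀ f z, |ev f z| ≤ κ * ‖f‖)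
    {x : ι → X} {y : ι → ℝ} {Cy : ℝ} (hy : ∀ k, |y k| ≤ Cy)
    {c lam m : ℝ} (hc : 0 ≤ c) (hlam : 0 < lam) (hm : 0 < m)
    {s t : Finset ι} (hcs : c * s.card ≤ 1) (hct : c * t.card ≤ 1) {f g : H}
    (hf : regularizedRisk ev x y c lam m s f ≤ regularizedRisk ev x y c lam m s 0)
    (hg : regularizedRisk ev x y c lam m t g ≤ regularizedRisk ev x y c lam m t 0)
    (x' : X) {y' : ℝ} (hy' : |y'| ≤ Cy) :
    |(y' - ev f x') ^ 2 - (y' - ev g x') ^ 2| ≤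
      2 * (Cy + κ * (Cy ^ 2 / lam) ^ (1 / m)) * |ev f x' - ev g x'| :=
  abs_sub_sq_sub_sub_sq_le hy'
    (abs_eval_le_of_regularizedRisk_le_zero hκ hev hc hcs (fun k _ ↦ hy k) hlam hm hf x')
    (abs_eval_le_of_regularizedRisk_le_zero hκ hev hc hct (fun k _ ↦ hy k) hlam hm hg x')

theorem mrlsr_cost_lipschitz_bound
    {X H : Type*} [NormedAddCommGroup H] [NormedSpace ℝ H]
    (κ : ℝ) (hκ : 0 < κ)
    (ev : H →ₗ[ℝ] (X → ℝ))
    (hev : ∀ (f : H) (x : X), |ev f x| ≤ κ * ‖f‖)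
    (n : ℕ) (hn : 1 ≤ n) (x : Fin n → X) (y : Fin n → ℝ) (Cy : ℝ)
    (hy : ∀ k, |y k| ≤ Cy)
    (lam m : ℝ) (hlam : 0 < lam) (hm : 0 < m)
    (i : Fin n) (fZ fZi : H)
    (hfZ : ∀ f : H,
      (1 / n) * (∑ k, (y k - ev fZ (x k)) ^ 2) + lam * ‖fZ‖ ^ m ≤
        (1 / n) * (∑ k, (y k - ev f (x k)) ^ 2) + lam * ‖f‖ ^ m)
    (hfZi : ∀ f : H,
      (1 / n) * (∑ k ∈ Finset.univ.erase i, (y k - ev fZi (x k)) ^ 2) + lam * ‖fZi‖ ^ m ≤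
        (1 / n) * (∑ k ∈ Finset.univ.erase i, (y k - ev f (x k)) ^ 2) + lam * ‖f‖ ^ m) :
    ∀ (x' : X) (y' : ℝ), |y'| ≤ Cy →
      |(y' - ev fZ x') ^ 2 - (y' - ev fZi x') ^ 2| ≤
        2 * (Cy + κ * (Cy ^ 2 / lam) ^ (1 / m)) * |ev fZ x' - ev fZi x'| := by
  intro x' y' hy'
  have hcard (s : Finset (Fin n)) : 1 / (n : ℝ) * s.card ≤ 1 := by
    rw [one_div_mul_eq_div]
    exact div_le_one_of_le₀ (mod_cast card_finset_fin_le s) n.cast_nonneg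
  exact mrlsr_cost_lipschitz_bound_general hκ.le hev hy (by positivity) hlam hm
    (hcard Finset.univ) (hcard (Finset.univ.erase i)) (hfZ 0) (hfZi 0) x' hy'
end

section
/- Let X be a type, H a real inner product space, and ev : H →ₗ[ℝ] (X → ℝ) a linear map. Let n ≥ 1, (x₁,y₁),…,(xₙ,yₙ) ∈ X × ℝ, λ > 0, m ≥ 2 a real number, and fix i with 1 ≤ i ≤ n. Suppose f_Z minimizes over H the objective J_Z(f) = (1/n)·Σₖ₌₁ⁿ (yₖ − ev f xₖ)² + λ·‖f‖^m, and f_{Z^i} minimizes over H the objective J_{Z^i}(f) = (1/n)·Σ_{k≠i} (yₖ − ev f xₖ)² + λ·‖f‖^m. Then, writing g = (f_Z + f_{Z^i})/2 for the midpoint: 2·λ·n·‖(f_Z − f_{Z^i})/2‖^m ≤ |(yᵢ − ev f_Z xᵢ)² − (yᵢ − ev g xᵢ)²|. -/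
/-!
Clarkson's inequality makes `‖·‖ ^ m` uniformly midpoint convex: at the midpoint `g` of `u` and `v`
it falls below the mean of its endpoint values by at least `‖(u - v) / 2‖ ^ m`. Testing both
minimizers against `g` and adding the two optimality inequalities, the terms shared by the two
objectives drop out by convexity. What remains bounds this deficit by the change, between `u` and
`g`, of the one loss that was left out.
-/

open Finset Set

section Clarkson

variable {H : Type*} [SeminormedAddCommGroup H] [InnerProductSpace ℝ H] {m : ℝ}

theorem two_mul_norm_rpow_add_norm_rpow_le (hm : 2 ≤ m) (a b : H) :
    2 * (‖a‖ ^ m + ‖b‖ ^ m) ≤ ‖a + b‖ ^ m + ‖a - b‖ ^ m := by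
  have hp : 1 ≤ m / 2 := by linarith
  have sq_rpow (w : H) : (‖w‖ ^ 2) ^ (m / 2) = ‖w‖ ^ m := by
    rw [← Real.rpow_natCast_mul (norm_nonneg w)]
    congr 1
    push_cast
    ring
  have parallelogram :
      ‖a‖ ^ 2 + ‖b‖ ^ 2 = 1 / 2 * ‖a + b‖ ^ 2 + 1 / 2 * ‖a - b‖ ^ 2 := by
    linarith [parallelogram_law_with_norm ℝ a b]
  have superadditive : ‖a‖ ^ m + ‖b‖ ^ m ≤ (‖a‖ ^ 2 + ‖b‖ ^ 2) ^ (m / 2) := by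
    simpa only [sq_rpow] using Real.add_rpow_le_rpow_add (sq_nonneg ‖a‖) (sq_nonneg ‖b‖) hp
  have power_mean : (1 / 2 * ‖a + b‖ ^ 2 + 1 / 2 * ‖a - b‖ ^ 2) ^ (m / 2) ≤
      1 / 2 * ‖a + b‖ ^ m + 1 / 2 * ‖a - b‖ ^ m := by
    simpa only [sq_rpow, smul_eq_mul] using (convexOn_rpow hp).2 (mem_Ici.2 (sq_nonneg ‖a + b‖))
      (mem_Ici.2 (sq_nonneg ‖a - b‖)) one_half_pos.le one_half_pos.le (add_halves 1)
  rw [← parallelogram] at power_mean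
  linarith

theorem two_mul_norm_half_smul_sub_rpow_le (hm : 2 ≤ m) (u v : H) :
    2 * ‖(1 / 2 : ℝ) • (u - v)‖ ^ m ≤
      ‖u‖ ^ m + ‖v‖ ^ m - 2 * ‖(1 / 2 : ℝ) • (u + v)‖ ^ m := by
  have half_add_half : (1 / 2 : ℝ) • (u + v) + (1 / 2 : ℝ) • (u - v) = u := by module
  have half_sub_half : (1 / 2 : ℝ) • (u + v) - (1 / 2 : ℝ) • (u - v) = v := by module
  have clarkson :=
    two_mul_norm_rpow_add_norm_rpow_le hm ((1 / 2 : ℝ) • (u + v)) ((1 / 2 : ℝ) • (u - v))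
  rw [half_add_half, half_sub_half] at clarkson
  linarith

end Clarkson

section Convex

theorem convexOn_finset_sum {𝕜 E β ι : Type*} [Semiring 𝕜] [PartialOrder 𝕜] [AddCommMonoid E]
    [SMul 𝕜 E] [AddCommMonoid β] [PartialOrder β] [IsOrderedAddMonoid β] [Module 𝕜 β] {K : Set E}
    (hK : Convex 𝕜 K) {s : Finset ι} {f : ι → E → β} (hf : ∀ k ∈ s, ConvexOn 𝕜 K (f k)) :
    ConvexOn 𝕜 K fun a => ∑ k ∈ s, f k a := by
  simpa only [Finset.sum_fn] using
    sum_induction f (ConvexOn 𝕜 K) (fun _ _ => ConvexOn.add) (convexOn_const 0 hK) hf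

variable {E : Type*} [AddCommGroup E] [Module ℝ E]

theorem convexOn_sub_sq (φ : E →ₗ[ℝ] ℝ) (c : ℝ) :
    ConvexOn ℝ univ fun f => (c - φ f) ^ 2 :=
  even_two.convexOn_pow.comp_affineMap (AffineMap.const ℝ E c - φ.toAffineMap)

theorem add_sub_two_mul_half_smul_add_le_of_isMinOn {K : Set E} {A N L : E → ℝ} {u v : E}
    (hA : ConvexOn ℝ K A) (huK : u ∈ K) (hvK : v ∈ K)
    (hu : IsMinOn (fun f => L f + A f + N f) K u) (hv : IsMinOn (fun f => A f + N f) K v) :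
    N u + N v - 2 * N ((1 / 2 : ℝ) • (u + v)) ≤ L ((1 / 2 : ℝ) • (u + v)) - L u := by
  set g := (1 / 2 : ℝ) • (u + v) with hg
  rw [smul_add] at hg
  have hgK : g ∈ K := hg ▸ hA.1 huK hvK one_half_pos.le one_half_pos.le (add_halves 1)
  have hAg : A g ≤ 1 / 2 * A u + 1 / 2 * A v :=
    hg ▸ hA.2 huK hvK one_half_pos.le one_half_pos.le (add_halves 1)
  have hug : L u + A u + N u ≤ L g + A g + N g := hu hgK
  have hvg : A v + N v ≤ A g + N g := hv hgK
  linarith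

end Convex

theorem mrlsr_midpoint_stability_inequality_general
    {ι H : Type*} [DecidableEq ι] [SeminormedAddCommGroup H] [InnerProductSpace ℝ H]
    {K : Set H} (hK : Convex ℝ K) {s : Finset ι} {i : ι} (hi : i ∈ s) {L : ι → H → ℝ}
    (hL : ∀ k ∈ s.erase i, ConvexOn ℝ K (L k))
    {c lam m : ℝ} (hc : 0 < c) (hlam : 0 ≤ lam) (hm : 2 ≤ m) {u v : H} (huK : u ∈ K) (hvK : v ∈ K)
    (hu : IsMinOn (fun f => 1 / c * ∑ k ∈ s, L k f + lam * ‖f‖ ^ m) K u)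
    (hv : IsMinOn (fun f => 1 / c * ∑ k ∈ s.erase i, L k f + lam * ‖f‖ ^ m) K v) :
    2 * lam * c * ‖(1 / 2 : ℝ) • (u - v)‖ ^ m ≤ L i ((1 / 2 : ℝ) • (u + v)) - L i u := by
  set g := (1 / 2 : ℝ) • (u + v)
  have shared_convex : ConvexOn ℝ K fun f => 1 / c * ∑ k ∈ s.erase i, L k f :=
    (convexOn_finset_sum hK hL).smul (one_div_pos.2 hc).le
  simp only [← add_sum_erase s _ hi, mul_add] at hu
  have gap_le_loss : lam * ‖u‖ ^ m + lam * ‖v‖ ^ m - 2 * (lam * ‖g‖ ^ m) ≤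
      1 / c * L i g - 1 / c * L i u :=
    add_sub_two_mul_half_smul_add_le_of_isMinOn shared_convex huK hvK hu hv
  calc 2 * lam * c * ‖(1 / 2 : ℝ) • (u - v)‖ ^ m
      = c * (lam * (2 * ‖(1 / 2 : ℝ) • (u - v)‖ ^ m)) := by ring
    _ ≤ c * (lam * (‖u‖ ^ m + ‖v‖ ^ m - 2 * ‖g‖ ^ m)) := by
        gcongr
        exact two_mul_norm_half_smul_sub_rpow_le hm u v
    _ = c * (lam * ‖u‖ ^ m + lam * ‖v‖ ^ m - 2 * (lam * ‖g‖ ^ m)) := by ring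
    _ ≤ c * (1 / c * L i g - 1 / c * L i u) := by gcongr
    _ = L i g - L i u := by field_simp

theorem mrlsr_midpoint_stability_inequality
    {X H : Type*} [NormedAddCommGroup H] [InnerProductSpace ℝ H]
    (ev : H →ₗ[ℝ] (X → ℝ))
    (n : ℕ) (hn : 1 ≤ n) (x : Fin n → X) (y : Fin n → ℝ)
    (lam m : ℝ) (hlam : 0 < lam) (hm : 2 ≤ m)
    (i : Fin n) (fZ fZi : H)
    (hfZ : ∀ f : H,
      (1 / n) * (∑ k, (y k - ev fZ (x k)) ^ 2) + lam * ‖fZ‖ ^ m ≤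
        (1 / n) * (∑ k, (y k - ev f (x k)) ^ 2) + lam * ‖f‖ ^ m)
    (hfZi : ∀ f : H,
      (1 / n) * (∑ k ∈ Finset.univ.erase i, (y k - ev fZi (x k)) ^ 2) + lam * ‖fZi‖ ^ m ≤
        (1 / n) * (∑ k ∈ Finset.univ.erase i, (y k - ev f (x k)) ^ 2) + lam * ‖f‖ ^ m) :
    2 * lam * n * ‖((1 : ℝ) / 2) • (fZ - fZi)‖ ^ m ≤
      |(y i - ev fZ (x i)) ^ 2 - (y i - ev (((1 : ℝ) / 2) • (fZ + fZi)) (x i)) ^ 2| := by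
  have loss_decrease := mrlsr_midpoint_stability_inequality_general convex_univ (Finset.mem_univ i)
    (fun k _ => convexOn_sub_sq (LinearMap.proj (x k) ∘ₗ ev) (y k)) (Nat.cast_pos.2 hn) hlam.le hm
    (Set.mem_univ _) (Set.mem_univ _) (isMinOn_univ_iff.2 hfZ) (isMinOn_univ_iff.2 hfZi)
  exact (loss_decrease.trans (le_abs_self _)).trans_eq (abs_sub_comm _ _)
end
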